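/- Let G₁ and G₂ be two graphs (2-uniform hypergraphs) on n vertices. If |E(G₁)|·|E(G₂)| < C(n,2), then G₁ and G₂ pack. -/

import Mathlib

open Finset

/-- A family of edges is `k`-uniform if every edge has exactly `k` vertices. -/
def Uniform (k : ℕ) {V : Type*} (E : Finset (Finset V)) : Prop :=
  ∀ e ∈ E, e.card = k

/-- Two hypergraphs (given by their edge sets) pack if there is a bijection of the
vertex sets mapping every edge of the first to a non-edge of the second. -/
def Packs {V₁ V₂ : Type*} [DecidableEq V₂]
    (E₁ : Finset (Finset V₁)) (E₂ : Finset (Finset V₂)) : Prop :=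
  ∃ f : V₁ ≃ V₂, ∀ e ∈ E₁, e.image f ∉ E₂

/-- `maxDeg l E` is `Δ_l(H)`: the maximum, over `l`-element vertex subsets `U`,
of the number of edges containing `U`. -/
def maxDeg {V : Type*} [Fintype V] [DecidableEq V] (l : ℕ) (E : Finset (Finset V)) : ℕ :=
  (Finset.univ.powersetCard l).sup fun U => (E.filter fun e => U ⊆ e).card

/-- A `t`-`(n, k, lam)` design: a family of `k`-element subsets such that every
`t`-element vertex subset is contained in exactly `lam` members. -/
def IsDesign (t k lam : ℕ) {V : Type*} [Fintype V] [DecidableEq V]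
    (T : Finset (Finset V)) : Prop :=
  (∀ e ∈ T, e.card = k) ∧
  ∀ S : Finset V, S.card = t → (T.filter fun e => S ⊆ e).card = lam

/-- `mMin n k` is the minimum possible value of `|E(H₁)| + |E(H₂)|` over all pairs of
`k`-uniform hypergraphs `H₁`, `H₂` on `n` vertices that do not pack. -/
noncomputable def mMin (n k : ℕ) : ℕ :=
  sInf {m | ∃ E₁ E₂ : Finset (Finset (Fin n)), Uniform k E₁ ∧ Uniform k E₂ ∧
    ¬ Packs E₁ E₂ ∧ E₁.card + E₂.card = m}


lemma exists_perm_image {n : ℕ} (a b : Finset (Fin n)) (h : a.card = b.card) :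
    ∃ g : Equiv.Perm (Fin n), a.image g = b := by
  let e : {x // x ∈ a} ≃ {x // x ∈ b} := Finset.equivOfCardEq h
  refine ⟨e.extendSubtype, ?_⟩
  apply Finset.eq_of_subset_of_card_le
  · intro y hy
    obtain ⟨x, hx, rfl⟩ := Finset.mem_image.1 hy
    exact e.extendSubtype_mem x hx
  · rw [Finset.card_image_of_injective _ (Equiv.injective _), h]

lemma card_perm_image_le {n : ℕ} (a b c : Finset (Fin n)) (h : b.card = c.card) :
    (univ.filter fun f : Equiv.Perm (Fin n) => a.image f = b).card ≤
    (univ.filter fun f : Equiv.Perm (Fin n) => a.image f = c).card := by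
  obtain ⟨g, hg⟩ := exists_perm_image b c h
  apply Finset.card_le_card_of_injOn (fun f => g * f)
  · intro f hf
    have hf' : a.image f = b := by simpa using hf
    have : a.image (g * f : Equiv.Perm (Fin n)) = c := by
      rw [← hg, ← hf', Finset.image_image]; rfl
    simpa using this
  · intro f _ f' _ hff
    exact mul_left_cancel hff

lemma card_perm_image_mul {n : ℕ} (a b : Finset (Fin n)) (ha : a.card = 2) (hb : b.card = 2) :
    n.choose 2 * (univ.filter fun f : Equiv.Perm (Fin n) => a.image f = b).card
      = Fintype.card (Equiv.Perm (Fin n)) := by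
  have h := Finset.card_eq_sum_card_fiberwise (s := (univ : Finset (Equiv.Perm (Fin n))))
    (f := fun f : Equiv.Perm (Fin n) => a.image f) (t := (univ : Finset (Fin n)).powersetCard 2) (by
      intro f _
      simp [Finset.mem_powersetCard, Finset.card_image_of_injective _ f.injective, ha])
  rw [← Finset.card_univ, h, Finset.sum_congr rfl (g := fun _ =>
    (univ.filter fun f : Equiv.Perm (Fin n) => a.image f = b).card)]
  · simp
  · intro c hc
    have hc := (Finset.mem_powersetCard.1 hc).2
    exact le_antisymm (card_perm_image_le a c b (by omega)) (card_perm_image_le a b c (by omega))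

/-- if `|E(G₁)|·|E(G₂)| < C(n,2)` then the two graphs (2-uniform
hypergraphs) on `n` vertices pack. -/
theorem stmt_7 (n : ℕ)
    (E₁ E₂ : Finset (Finset (Fin n))) (h₁ : Uniform 2 E₁) (h₂ : Uniform 2 E₂)
    (h : E₁.card * E₂.card < n.choose 2) :
    Packs E₁ E₂ := by
  by_contra hP
  have hcov : (univ : Finset (Equiv.Perm (Fin n))) ⊆ (E₁ ×ˢ E₂).biUnion
      (fun p => univ.filter fun f : Equiv.Perm (Fin n) => p.1.image f = p.2) := by
    intro f _
    by_contra hf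
    apply hP
    refine ⟨f, fun e he hfe => hf ?_⟩
    exact Finset.mem_biUnion.2 ⟨(e, e.image f), Finset.mem_product.2 ⟨he, hfe⟩, by simp⟩
  have h3 := (Finset.card_le_card hcov).trans Finset.card_biUnion_le
  have h4 := Nat.mul_le_mul_left (n.choose 2) h3
  rw [Finset.mul_sum, Finset.sum_congr rfl (g := fun _ => Fintype.card (Equiv.Perm (Fin n)))
    (fun p hp => card_perm_image_mul p.1 p.2 (h₁ _ (Finset.mem_product.1 hp).1)
      (h₂ _ (Finset.mem_product.1 hp).2)), Finset.sum_const, Finset.card_product, smul_eq_mul,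
      Finset.card_univ] at h4
  exact absurd (Nat.le_of_mul_le_mul_right h4 Fintype.card_pos) (by omega)
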